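/- Let L be a 2-dimensional K-subspace of Ṽ. Then every 1-dimensional subspace of L belongs to the flag variety 𝒢 if and only if there exists a pencil M of flags such that the set {φ(Φ) : Φ ∈ M} equals the set of all 1-dimensional subspaces of L. In other words, the φ-images of the pencils of flags are exactly the lines contained in 𝒢. -/

import Mathlib

open TensorProduct

/-- A flag of a 3-dimensional projective space: a triple `(P, g, ε)` of subspaces of the
underlying 4-dimensional vector space `V` with `finrank P = 1`, `finrank g = 2`,
`finrank ε = 3` and `P ≤ g ≤ ε`. -/
structure ProjFlag (K : Type*) (V : Type*) [DivisionRing K] [AddCommGroup V]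
    [Module K V] where
  pt : Submodule K V
  ln : Submodule K V
  pl : Submodule K V
  finrank_pt : Module.finrank K pt = 1
  finrank_ln : Module.finrank K ln = 2
  finrank_pl : Module.finrank K pl = 3
  pt_le_ln : pt ≤ ln
  ln_le_pl : ln ≤ pl

variable (K V : Type*) [Field K] [AddCommGroup V] [Module K V]

-- Helper instances (the canonical tensor product instances; registering them here merely
-- speeds up instance search, which otherwise gets lost unfolding `⋀[K]^2 V`).
noncomputable instance : AddCommGroup (↥(⋀[K]^2 V) ⊗[K] Module.Dual K V) :=
  TensorProduct.addCommGroup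

noncomputable instance : AddCommGroup (V ⊗[K] (↥(⋀[K]^2 V) ⊗[K] Module.Dual K V)) :=
  TensorProduct.addCommGroup

/-- The wedge `q ∧ r` of two vectors, as an element of the second exterior power. -/
def wedge2 (q r : V) : ⋀[K]^2 V :=
  ⟨ExteriorAlgebra.ιMulti K 2 ![q, r],
    ExteriorAlgebra.ιMulti_range K 2 (Set.mem_range_self _)⟩

/-- The 96-dimensional space `Ṽ = V ⊗ Λ²V ⊗ V*`. -/
abbrev FlagTensor := V ⊗[K] ↥(⋀[K]^2 V) ⊗[K] (Module.Dual K V)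

/-- `x = φ(Φ)`: the 1-dimensional subspace `x` of `Ṽ` represents the flag `Φ`, i.e. `x` is
spanned by `p ⊗ (q ∧ r) ⊗ e*` where `p` spans the point of `Φ`, `q, r` is a basis of the
line of `Φ`, and `e*` is a linear form whose kernel is the plane of `Φ`. -/
def IsFlagRep (Φ : ProjFlag K V) (x : Submodule K (FlagTensor K V)) : Prop :=
  ∃ (p q r : V) (e : Module.Dual K V),
    Submodule.span K {p} = Φ.pt ∧ Submodule.span K {q, r} = Φ.ln ∧
    LinearMap.ker e = Φ.pl ∧
    x = Submodule.span K {p ⊗ₜ[K] wedge2 K V q r ⊗ₜ[K] e}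

/-- The flag variety `𝒢`: the set of all 1-dimensional subspaces `φ(Φ)` of `Ṽ` with `Φ` a
flag. -/
def flagVariety : Set (Submodule K (FlagTensor K V)) :=
  {x | ∃ Φ : ProjFlag K V, IsFlagRep K V Φ x}

/-- The set `F[g, ε]` of all flags with line component `g` and plane component `ε`. -/
def flagsOfLinePlane (g ε : Submodule K V) : Set (ProjFlag K V) :=
  {Φ : ProjFlag K V | Φ.ln = g ∧ Φ.pl = ε}

/-- The set `F[P, ε]` of all flags with point component `P` and plane component `ε`. -/
def flagsOfPointPlane (P ε : Submodule K V) : Set (ProjFlag K V) :=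
  {Φ : ProjFlag K V | Φ.pt = P ∧ Φ.pl = ε}

/-- The set `F[P, g]` of all flags with point component `P` and line component `g`. -/
def flagsOfPointLine (P g : Submodule K V) : Set (ProjFlag K V) :=
  {Φ : ProjFlag K V | Φ.pt = P ∧ Φ.ln = g}

/-- `M` is a pencil (of type 0, 1 or 2). -/
def IsPencil (M : Set (ProjFlag K V)) : Prop :=
  (∃ g ε : Submodule K V, Module.finrank K g = 2 ∧ Module.finrank K ε = 3 ∧ g ≤ ε ∧
    M = flagsOfLinePlane K V g ε) ∨
  (∃ P ε : Submodule K V, Module.finrank K P = 1 ∧ Module.finrank K ε = 3 ∧ P ≤ ε ∧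
    M = flagsOfPointPlane K V P ε) ∨
  (∃ P g : Submodule K V, Module.finrank K P = 1 ∧ Module.finrank K g = 2 ∧ P ≤ g ∧
    M = flagsOfPointLine K V P g)

section Helpers

variable {K V}
variable {M N : Type*} [AddCommGroup M] [Module K M] [AddCommGroup N] [Module K N]

theorem hx_dual {a : M} (ha : a ≠ 0) : ∃ f : M →ₗ[K] K, f a ≠ 0 := by
  obtain ⟨f, hf, -⟩ := Submodule.exists_le_ker_of_notMem (K := K) (p := ⊥) (v := a) (by simpa using ha)
  exact ⟨f, hf⟩

/-- contraction of the left factor -/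
noncomputable def cL (f : M →ₗ[K] K) : M ⊗[K] N →ₗ[K] N :=
  (TensorProduct.lid K N).toLinearMap ∘ₗ LinearMap.rTensor N f

noncomputable def cR (f : N →ₗ[K] K) : M ⊗[K] N →ₗ[K] M :=
  (TensorProduct.rid K M).toLinearMap ∘ₗ LinearMap.lTensor M f

theorem cL_tmul (f : M →ₗ[K] K) (a : M) (b : N) : cL f (a ⊗ₜ[K] b) = f a • b := by
  simp [cL]

theorem cR_tmul (f : N →ₗ[K] K) (a : M) (b : N) : cR f (a ⊗ₜ[K] b) = f b • a := by
  simp [cR]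

theorem tmul_ne {a : M} {b : N} (ha : a ≠ 0) (hb : b ≠ 0) : a ⊗ₜ[K] b ≠ 0 := by
  obtain ⟨f, hf⟩ := hx_dual (K := K) ha
  intro h
  have := congrArg (cL f) h
  rw [cL_tmul, map_zero] at this
  exact (smul_ne_zero hf hb) this

theorem tmul_eq {a c : M} {b d : N} (hc : c ≠ 0) (hd : d ≠ 0)
    (h : c ⊗ₜ[K] d = a ⊗ₜ[K] b) : (∃ t : K, c = t • a) ∧ (∃ t : K, d = t • b) := by
  constructor
  · obtain ⟨f, hf⟩ := hx_dual (K := K) hd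
    have := congrArg (cR f) h
    rw [cR_tmul, cR_tmul] at this
    refine ⟨(f d)⁻¹ * f b, ?_⟩
    rw [mul_smul, ← this, inv_smul_smul₀ hf]
  · obtain ⟨f, hf⟩ := hx_dual (K := K) hc
    have := congrArg (cL f) h
    rw [cL_tmul, cL_tmul] at this
    refine ⟨(f c)⁻¹ * f a, ?_⟩
    rw [mul_smul, ← this, inv_smul_smul₀ hf]

theorem tmul_add {a c x : M} {b d y : N} (ha : a ≠ 0) (hb : b ≠ 0)
    (h : a ⊗ₜ[K] b + c ⊗ₜ[K] d = x ⊗ₜ[K] y) :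
    (∃ t : K, c = t • a) ∨ (∃ t : K, d = t • b) := by
  by_cases h1 : c ∈ Submodule.span K {a}
  · obtain ⟨t, ht⟩ := Submodule.mem_span_singleton.1 h1
    exact Or.inl ⟨t, ht.symm⟩
  by_cases h2 : a ∈ Submodule.span K {c}
  · obtain ⟨t, ht⟩ := Submodule.mem_span_singleton.1 h2
    have ht0 : t ≠ 0 := by rintro rfl; exact ha (by simpa using ht.symm)
    exact Or.inl ⟨t⁻¹, by rw [← ht, inv_smul_smul₀ ht0]⟩
  right
  obtain ⟨f, hf, hf'⟩ := Submodule.exists_le_ker_of_notMem h1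
  obtain ⟨g, hg, hg'⟩ := Submodule.exists_le_ker_of_notMem h2
  have hfa : f a = 0 := hf' (Submodule.mem_span_singleton_self a)
  have hgc : g c = 0 := hg' (Submodule.mem_span_singleton_self c)
  have e1 := congrArg (cL f) h
  have e2 := congrArg (cL g) h
  simp only [map_add, cL_tmul, hfa, hgc, zero_smul, zero_add, add_zero] at e1 e2
  have hgx : g x ≠ 0 := by
    intro h0
    rw [h0, zero_smul] at e2
    exact smul_ne_zero hg hb e2
  refine ⟨(f c)⁻¹ * f x * (g x)⁻¹ * g a, ?_⟩
  rw [mul_smul, e2, ← mul_smul, mul_assoc, inv_mul_cancel₀ hgx, mul_one, mul_smul, ← e1,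
    inv_smul_smul₀ hf]

theorem span_pair_eq {S : Submodule K M} (hS : Module.finrank K S = 2) {x y : M}
    (hx : x ∈ S) (hy : y ∈ S) (hx0 : x ≠ 0) (hxy : ¬ ∃ t : K, y = t • x) :
    Submodule.span K {x, y} = S := by
  have hli : LinearIndependent K ![x, y] :=
    (LinearIndependent.pair_iff' hx0).2 fun a h => hxy ⟨a, h.symm⟩
  have : FiniteDimensional K S := Module.finite_of_finrank_pos (by omega)
  have hf := finrank_span_eq_card hli
  have hr : Set.range ![x, y] = {x, y} := by simp [Set.pair_comm]
  rw [hr, Fintype.card_fin] at hf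
  refine Submodule.eq_of_le_of_finrank_eq ?_ (by rw [hf, hS])
  rw [Submodule.span_le]
  rintro z (rfl | rfl) <;> assumption

theorem exists_compl {S : Submodule K M} (hS : Module.finrank K S = 2) {x : M}
    (hx : x ∈ S) (hx0 : x ≠ 0) : ∃ s, Submodule.span K {x, s} = S := by
  by_contra hcon
  have hle : S ≤ Submodule.span K {x} := by
    intro y hy
    by_contra hn
    refine hcon ⟨y, span_pair_eq hS hx hy hx0 ?_⟩
    rintro ⟨t, rfl⟩
    exact hn (Submodule.mem_span_singleton.2 ⟨t, rfl⟩)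
  have := Submodule.finrank_mono hle
  rw [finrank_span_singleton hx0] at this
  omega

theorem wedge2_coe (q r : V) : ((wedge2 K V q r : ⋀[K]^2 V) : ExteriorAlgebra K V) =
    ExteriorAlgebra.ι K q * ExteriorAlgebra.ι K r := by
  simp [wedge2, ExteriorAlgebra.ιMulti_apply]

theorem wedge2_comb (q r : V) (a b c d : K) :
    wedge2 K V (a • q + b • r) (c • q + d • r) = (a * d - b * c) • wedge2 K V q r := by
  apply Subtype.ext
  have h : ExteriorAlgebra.ι K r * ExteriorAlgebra.ι K q =
      - (ExteriorAlgebra.ι K q * ExteriorAlgebra.ι K r) := 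
    eq_neg_of_add_eq_zero_left (ExteriorAlgebra.ι_add_mul_swap r q)
  rw [Submodule.coe_smul, wedge2_coe, wedge2_coe]
  simp only [map_add, map_smul, add_mul, mul_add, smul_mul_assoc, mul_smul_comm,
    ExteriorAlgebra.ι_sq_zero, smul_zero, h]
  module

theorem wedge2_right (p s t : V) (x y z : K) :
    wedge2 K V p (x • p + y • s + z • t) = y • wedge2 K V p s + z • wedge2 K V p t := by
  apply Subtype.ext
  rw [Submodule.coe_add, Submodule.coe_smul, Submodule.coe_smul, wedge2_coe, wedge2_coe, wedge2_coe]
  simp only [map_add, map_smul, mul_add, mul_smul_comm,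
    ExteriorAlgebra.ι_sq_zero, smul_zero, zero_add]

theorem contr_wedge2 (f : Module.Dual K V) (q r : V) :
    CliffordAlgebra.contractLeft (Q := (0 : QuadraticForm K V)) f
      ((wedge2 K V q r : ⋀[K]^2 V) : ExteriorAlgebra K V) =
    ExteriorAlgebra.ι K (f q • r - f r • q) := by
  rw [wedge2_coe]
  have := CliffordAlgebra.contractLeft_ι_mul (Q := (0 : QuadraticForm K V)) f q 
    (CliffordAlgebra.ι _ r)
  rw [CliffordAlgebra.contractLeft_ι] at this
  refine this.trans ?_
  rw [← Algebra.commutes, ← Algebra.smul_def, map_sub, map_smul, map_smul]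

theorem wedge2_span {q r q' r' : V} (h : Submodule.span K {q', r'} = Submodule.span K {q, r}) :
    ∃ c : K, wedge2 K V q' r' = c • wedge2 K V q r := by
  have h1 : q' ∈ Submodule.span K {q, r} := h ▸ Submodule.subset_span (by simp)
  have h2 : r' ∈ Submodule.span K {q, r} := h ▸ Submodule.subset_span (by simp)
  obtain ⟨a, b, rfl⟩ := Submodule.mem_span_pair.1 h1
  obtain ⟨c, d, rfl⟩ := Submodule.mem_span_pair.1 h2
  exact ⟨_, wedge2_comb ..⟩

theorem pair_indep {q r : V} (h : Module.finrank K (Submodule.span K {q, r}) = 2) :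
    q ∉ Submodule.span K {r} ∧ r ∉ Submodule.span K {q} := by
  constructor
  · intro hq
    have : Submodule.span K {q, r} = Submodule.span K {r} := Submodule.span_insert_eq_span hq
    rw [this] at h
    have := finrank_span_le_card (R := K) ({r} : Set V)
    simp at this
    omega
  · intro hq
    have : Submodule.span K {q, r} = Submodule.span K {q} := by
      rw [Set.pair_comm]; exact Submodule.span_insert_eq_span hq
    rw [this] at h
    have := finrank_span_le_card (R := K) ({q} : Set V)
    simp at this
    omega

theorem wedge2_ne {q r : V} (h : Module.finrank K (Submodule.span K {q, r}) = 2) :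
    wedge2 K V q r ≠ 0 := by
  obtain ⟨h1, h2⟩ := pair_indep h
  obtain ⟨f, hf, hf'⟩ := Submodule.exists_le_ker_of_notMem h1
  have hfr : f r = 0 := hf' (Submodule.mem_span_singleton_self r)
  intro h0
  have := contr_wedge2 f q r
  rw [h0, hfr, zero_smul, sub_zero, Submodule.coe_zero, map_zero] at this
  have h3 : f q • r = 0 := by
    rw [← ExteriorAlgebra.ι_inj K, ← this, map_zero]
  have : r = 0 := (smul_eq_zero.1 h3).resolve_left hf
  exact h2 (this ▸ Submodule.zero_mem _)

theorem wedge2_mem {q r q' r' : V} (h : Module.finrank K (Submodule.span K {q', r'}) = 2) 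
    {c : K} (hc : wedge2 K V q' r' = c • wedge2 K V q r) :
    q' ∈ Submodule.span K {q, r} ∧ r' ∈ Submodule.span K {q, r} := by
  have key : ∀ f : Module.Dual K V, f q' • r' - f r' • q' ∈ Submodule.span K {q, r} := by
    intro f
    have h1 := contr_wedge2 f q' r'
    rw [hc, Submodule.coe_smul, map_smul, contr_wedge2, ← map_smul, ExteriorAlgebra.ι_inj] at h1
    rw [← h1]
    refine Submodule.smul_mem _ _ (Submodule.sub_mem _ (Submodule.smul_mem _ _ ?_)
      (Submodule.smul_mem _ _ ?_)) <;> exact Submodule.subset_span (by simp)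
  obtain ⟨h1, h2⟩ := pair_indep h
  constructor
  · obtain ⟨f, hf, hf'⟩ := Submodule.exists_le_ker_of_notMem h2
    have hfr : f q' = 0 := hf' (Submodule.mem_span_singleton_self q')
    have := key f
    rw [hfr, zero_smul, zero_sub, Submodule.neg_mem_iff] at this
    exact (Submodule.smul_mem_iff _ hf).1 this
  · obtain ⟨f, hf, hf'⟩ := Submodule.exists_le_ker_of_notMem h1
    have hfr : f r' = 0 := hf' (Submodule.mem_span_singleton_self r')
    have := key f
    rw [hfr, zero_smul, sub_zero] at this
    exact (Submodule.smul_mem_iff _ hf).1 this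

/-- The vectors `p, q, r, e` represent the flag. -/
structure FRep (Φ : ProjFlag K V) (p q r : V) (e : Module.Dual K V) : Prop where
  hp : Submodule.span K {p} = Φ.pt
  hg : Submodule.span K {q, r} = Φ.ln
  he : LinearMap.ker e = Φ.pl

namespace FRep
variable {Φ Ψ : ProjFlag K V} {p q r p' q' r' : V} {e e' : Module.Dual K V}

theorem p_ne (h : FRep Φ p q r e) : p ≠ 0 := by
  rintro rfl
  have h1 := Φ.finrank_pt
  rw [← h.hp, Submodule.span_zero_singleton, finrank_bot] at h1
  omega

theorem w_ne (h : FRep Φ p q r e) : wedge2 K V q r ≠ 0 :=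
  wedge2_ne (by rw [h.hg, Φ.finrank_ln])

theorem e_ne (hV : Module.finrank K V = 4) (h : FRep Φ p q r e) : e ≠ 0 := by
  rintro rfl
  have h1 := Φ.finrank_pl
  rw [← h.he, LinearMap.ker_zero, finrank_top] at h1
  omega

theorem t_ne (hV : Module.finrank K V = 4) (h : FRep Φ p q r e) :
    p ⊗ₜ[K] wedge2 K V q r ⊗ₜ[K] e ≠ 0 :=
  tmul_ne (tmul_ne h.p_ne h.w_ne) (h.e_ne hV)

theorem p_mem (h : FRep Φ p q r e) : p ∈ Φ.pt := h.hp ▸ Submodule.mem_span_singleton_self p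

theorem pt_eq (h : FRep Φ p q r e) (h' : FRep Ψ p' q' r' e') {t : K} (ht : p' = t • p) :
    Ψ.pt = Φ.pt := by
  have : t ≠ 0 := by rintro rfl; exact h'.p_ne (by simpa using ht)
  rw [← h.hp, ← h'.hp, ht, Submodule.span_singleton_smul_eq (IsUnit.mk0 t this)]

theorem pt_eq' (h : FRep Φ p q r e) (h' : FRep Ψ p' q' r' e') (ht : Ψ.pt = Φ.pt) :
    ∃ t : K, p' = t • p := by
  have := h'.p_mem
  rw [ht, ← h.hp] at this
  obtain ⟨t, ht⟩ := Submodule.mem_span_singleton.1 this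
  exact ⟨t, ht.symm⟩

theorem ln_eq (h : FRep Φ p q r e) (h' : FRep Ψ p' q' r' e') {t : K}
    (ht : wedge2 K V q' r' = t • wedge2 K V q r) : Ψ.ln = Φ.ln := by
  have hfin : FiniteDimensional K Φ.ln :=
    Module.finite_of_finrank_pos (by rw [Φ.finrank_ln]; omega)
  refine Submodule.eq_of_le_of_finrank_eq ?_ (by rw [Φ.finrank_ln, Ψ.finrank_ln])
  have := wedge2_mem (by rw [h'.hg, Ψ.finrank_ln]) ht
  rw [← h.hg, ← h'.hg, Submodule.span_le]
  rintro z (rfl | rfl)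
  exacts [this.1, this.2]

theorem ln_eq' (h : FRep Φ p q r e) (h' : FRep Ψ p' q' r' e') (ht : Ψ.ln = Φ.ln) :
    ∃ t : K, wedge2 K V q' r' = t • wedge2 K V q r :=
  wedge2_span (by rw [h.hg, h'.hg, ht])

theorem pl_eq (hV : Module.finrank K V = 4) (h : FRep Φ p q r e) (h' : FRep Ψ p' q' r' e') {t : K}
    (ht : e' = t • e) : Ψ.pl = Φ.pl := by
  have : t ≠ 0 := by rintro rfl; exact h'.e_ne hV (by simpa using ht)
  rw [← h.he, ← h'.he, ht, LinearMap.ker_smul _ _ this]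

theorem pl_eq' (hV : Module.finrank K V = 4) (h : FRep Φ p q r e) (h' : FRep Ψ p' q' r' e')
    (ht : Ψ.pl = Φ.pl) : ∃ t : K, e' = t • e := by
  rw [← h.he, ← h'.he] at ht
  have hx : ∃ x, e x ≠ 0 := by
    by_contra hcon
    push Not at hcon
    exact h.e_ne hV (LinearMap.ext hcon)
  obtain ⟨x, hx⟩ := hx
  refine ⟨e' x * (e x)⁻¹, LinearMap.ext fun y => ?_⟩
  have hy : y - ((e x)⁻¹ * e y) • x ∈ LinearMap.ker e := by
    simp only [LinearMap.mem_ker, map_sub, map_smul, smul_eq_mul]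
    field_simp
    simp
  rw [← ht] at hy
  simp only [LinearMap.mem_ker, map_sub, map_smul, smul_eq_mul] at hy
  simp only [LinearMap.smul_apply, smul_eq_mul]
  linear_combination hy

end FRep

theorem exists_rep {z : Submodule K (FlagTensor K V)} (hz : z ∈ flagVariety K V)
    {t : FlagTensor K V} (ht : z = Submodule.span K {t}) (ht0 : t ≠ 0) :
    ∃ Φ p q r e, FRep Φ p q r e ∧ IsFlagRep K V Φ z ∧
      t = p ⊗ₜ[K] wedge2 K V q r ⊗ₜ[K] e := by
  obtain ⟨Φ, h⟩ := hz
  obtain ⟨p, q, r, e, h1, h2, h3, h4⟩ := id h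
  have : t ∈ Submodule.span K {p ⊗ₜ[K] wedge2 K V q r ⊗ₜ[K] e} := by
    rw [← h4, ht]; exact Submodule.mem_span_singleton_self t
  obtain ⟨c, hc⟩ := Submodule.mem_span_singleton.1 this
  have hc0 : c ≠ 0 := by rintro rfl; exact ht0 (by simpa using hc.symm)
  refine ⟨Φ, c • p, q, r, e, ⟨?_, h2, h3⟩, h, ?_⟩
  · rw [Submodule.span_singleton_smul_eq (IsUnit.mk0 c hc0), h1]
  · rw [← hc]; simp only [TensorProduct.smul_tmul']

/-- reduction of the set equality to the essential content -/
theorem set_eq_of (hV : Module.finrank K V = 4) {L : Submodule K (FlagTensor K V)}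
    (h : ∀ z : Submodule K (FlagTensor K V), Module.finrank K z = 1 → z ≤ L →
        z ∈ flagVariety K V) {M : Set (ProjFlag K V)}
    (h1 : ∀ Φ ∈ M, ∀ p q r e, FRep Φ p q r e → p ⊗ₜ[K] wedge2 K V q r ⊗ₜ[K] e ∈ L)
    (h2 : ∀ Φ p q r e, FRep Φ p q r e → p ⊗ₜ[K] wedge2 K V q r ⊗ₜ[K] e ∈ L → Φ ∈ M) :
    {x : Submodule K (FlagTensor K V) | ∃ Φ ∈ M, IsFlagRep K V Φ x} =
        {z : Submodule K (FlagTensor K V) | Module.finrank K z = 1 ∧ z ≤ L} := by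
  ext z
  constructor
  · rintro ⟨Φ, hΦ, p, q, r, e, a1, a2, a3, rfl⟩
    have hr : FRep Φ p q r e := ⟨a1, a2, a3⟩
    exact ⟨finrank_span_singleton (hr.t_ne hV),
      (Submodule.span_singleton_le_iff_mem _ _).2 (h1 Φ hΦ p q r e hr)⟩
  · rintro ⟨hz1, hz2⟩
    obtain ⟨Φ, p, q, r, e, a1, a2, a3, hh⟩ := h z hz1 hz2
    have hr : FRep Φ p q r e := ⟨a1, a2, a3⟩
    refine ⟨Φ, h2 Φ p q r e hr ?_, p, q, r, e, a1, a2, a3, hh⟩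
    apply hz2
    rw [hh]
    exact Submodule.mem_span_singleton_self _

theorem out1 {X : Type*} [AddCommGroup X] [Module K X] (c : K) (a : M) (b : N) (x : X) :
    (c • a) ⊗ₜ[K] b ⊗ₜ[K] x = c • (a ⊗ₜ[K] b ⊗ₜ[K] x) := by
  rw [TensorProduct.smul_tmul', TensorProduct.smul_tmul']

theorem out2 {X : Type*} [AddCommGroup X] [Module K X] (c : K) (a : M) (b : N) (x : X) :
    a ⊗ₜ[K] (c • b) ⊗ₜ[K] x = c • (a ⊗ₜ[K] b ⊗ₜ[K] x) := by
  rw [TensorProduct.tmul_smul, ← TensorProduct.smul_tmul']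

theorem out3 {X : Type*} [AddCommGroup X] [Module K X] (c : K) (a : M) (b : N) (x : X) :
    a ⊗ₜ[K] b ⊗ₜ[K] (c • x) = c • (a ⊗ₜ[K] b ⊗ₜ[K] x) := by
  rw [TensorProduct.tmul_smul]

theorem tmul3_eq {X : Type*} [AddCommGroup X] [Module K X] {a c : M} {b d : N} {x y : X}
    (hc : c ≠ 0) (hd : d ≠ 0) (hy : y ≠ 0)
    (h : c ⊗ₜ[K] d ⊗ₜ[K] y = a ⊗ₜ[K] b ⊗ₜ[K] x) :
    (∃ t : K, c = t • a) ∧ (∃ t : K, d = t • b) ∧ (∃ t : K, y = t • x) := by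
  obtain ⟨⟨t, h1⟩, h2⟩ := tmul_eq (tmul_ne hc hd) hy h
  rw [TensorProduct.smul_tmul'] at h1
  obtain ⟨⟨s, h3⟩, h4⟩ := tmul_eq hc hd h1
  exact ⟨⟨s * t, by rw [h3, mul_smul]⟩, h4, h2⟩

theorem tmul3_add {X : Type*} [AddCommGroup X] [Module K X] {a c a' : M} {b d b' : N} {x y x' : X}
    (ha : a ≠ 0) (hb : b ≠ 0) (hx : x ≠ 0) (hc : c ≠ 0) (hd : d ≠ 0) (hy : y ≠ 0)
    (h : a ⊗ₜ[K] b ⊗ₜ[K] x + c ⊗ₜ[K] d ⊗ₜ[K] y = a' ⊗ₜ[K] b' ⊗ₜ[K] x') :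
    ((∃ t : K, d = t • b) ∧ (∃ t : K, y = t • x)) ∨
    ((∃ t : K, c = t • a) ∧ (∃ t : K, y = t • x)) ∨
    ((∃ t : K, c = t • a) ∧ (∃ t : K, d = t • b)) := by
  rcases tmul_add (tmul_ne ha hb) hx h with ⟨t, h1⟩ | ⟨t, h1⟩
  · rw [TensorProduct.smul_tmul'] at h1
    obtain ⟨⟨s, h3⟩, h4⟩ := tmul_eq hc hd h1
    exact Or.inr (Or.inr ⟨⟨s * t, by rw [h3, mul_smul]⟩, h4⟩)
  · obtain ⟨f, hf⟩ := hx_dual (K := K) hx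
    have h2 := congrArg (cR f) h
    have ht : t ≠ 0 := by rintro rfl; exact hy (by simpa using h1)
    simp only [map_add, cR_tmul, h1, map_smul, TensorProduct.smul_tmul'] at h2
    have hft : (t • f x) ≠ 0 := smul_ne_zero ht hf
    rcases tmul_add (smul_ne_zero hf ha) hb h2 with ⟨s, h3⟩ | h3
    · refine Or.inr (Or.inl ⟨⟨(t • f x)⁻¹ * s * f x, ?_⟩, t, h1⟩)
      rw [mul_smul, mul_smul, ← h3, inv_smul_smul₀ hft]
    · exact Or.inl ⟨h3, t, h1⟩


theorem case0 (hV : Module.finrank K V = 4) {L : Submodule K (FlagTensor K V)}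
    (h : ∀ z : Submodule K (FlagTensor K V), Module.finrank K z = 1 → z ≤ L →
        z ∈ flagVariety K V) {Φ Ψ : ProjFlag K V} {p q r p' q' r' : V} {e e' : Module.Dual K V}
    (hu : FRep Φ p q r e) (hv : FRep Ψ p' q' r' e')
    (hL : Submodule.span K {p ⊗ₜ[K] wedge2 K V q r ⊗ₜ[K] e,
      p' ⊗ₜ[K] wedge2 K V q' r' ⊗ₜ[K] e'} = L)
    (hind : ¬ ∃ t : K, p' ⊗ₜ[K] wedge2 K V q' r' ⊗ₜ[K] e' =
      t • (p ⊗ₜ[K] wedge2 K V q r ⊗ₜ[K] e))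
    {s t : K} (hs : wedge2 K V q' r' = s • wedge2 K V q r) (ht : e' = t • e) :
    {x : Submodule K (FlagTensor K V) | ∃ Φ' ∈ flagsOfLinePlane K V Φ.ln Φ.pl,
      IsFlagRep K V Φ' x} =
        {z : Submodule K (FlagTensor K V) | Module.finrank K z = 1 ∧ z ≤ L} := by
  have hln := hu.ln_eq hv hs
  have hs0 : s ≠ 0 := by rintro rfl; exact hv.w_ne (by simpa using hs)
  have ht0 : t ≠ 0 := by rintro rfl; exact hv.e_ne hV (by simpa using ht)
  rw [hs, ht] at hL hind
  simp only [out1, out2, out3, smul_smul] at hL hind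
  have hg : Submodule.span K {p, p'} = Φ.ln := by
    refine span_pair_eq Φ.finrank_ln (Φ.pt_le_ln hu.p_mem)
      (hln ▸ Ψ.pt_le_ln hv.p_mem) hu.p_ne ?_
    rintro ⟨c, hc⟩
    exact hind ⟨s * t * c, by rw [hc]; simp only [out1, smul_smul]; congr 1; ring⟩
  apply set_eq_of hV h
  · rintro Φ' ⟨h1, h2⟩ x y z f hf
    obtain ⟨c, hc⟩ := hu.ln_eq' hf h1
    obtain ⟨d, hd⟩ := hu.pl_eq' hV hf h2
    have hx := Φ'.pt_le_ln hf.p_mem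
    rw [h1, ← hg] at hx
    obtain ⟨α, β, rfl⟩ := Submodule.mem_span_pair.1 hx
    rw [← hL, Submodule.mem_span_pair, hc, hd]
    refine ⟨d * c * α, d * c * β * (t * s)⁻¹, ?_⟩
    simp only [TensorProduct.tmul_add, TensorProduct.add_tmul, out1, out2, out3, smul_smul,
      smul_add]
    congr 2 <;> field_simp
  · intro Φ' x y z f hf hmem
    rw [← hL, Submodule.mem_span_pair] at hmem
    obtain ⟨α, β, hab⟩ := hmem
    rw [smul_smul, ← out1, ← out1, ← TensorProduct.add_tmul, ← TensorProduct.add_tmul] at hab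
    obtain ⟨-, ⟨c, hc⟩, ⟨d, hd⟩⟩ := tmul3_eq hf.p_ne hf.w_ne (hf.e_ne hV) hab.symm
    exact ⟨hu.ln_eq hf hc, hu.pl_eq hV hf hd⟩

theorem case2 (hV : Module.finrank K V = 4) {L : Submodule K (FlagTensor K V)}
    (h : ∀ z : Submodule K (FlagTensor K V), Module.finrank K z = 1 → z ≤ L →
        z ∈ flagVariety K V) {Φ Ψ : ProjFlag K V} {p q r p' q' r' : V} {e e' : Module.Dual K V}
    (hu : FRep Φ p q r e) (hv : FRep Ψ p' q' r' e')
    (hL : Submodule.span K {p ⊗ₜ[K] wedge2 K V q r ⊗ₜ[K] e,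
      p' ⊗ₜ[K] wedge2 K V q' r' ⊗ₜ[K] e'} = L)
    (hind : ¬ ∃ t : K, p' ⊗ₜ[K] wedge2 K V q' r' ⊗ₜ[K] e' =
      t • (p ⊗ₜ[K] wedge2 K V q r ⊗ₜ[K] e))
    {s t : K} (hs : wedge2 K V q' r' = s • wedge2 K V q r) (ht : p' = t • p) :
    {x : Submodule K (FlagTensor K V) | ∃ Φ' ∈ flagsOfPointLine K V Φ.pt Φ.ln,
      IsFlagRep K V Φ' x} =
        {z : Submodule K (FlagTensor K V) | Module.finrank K z = 1 ∧ z ≤ L} := by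
  have : FiniteDimensional K V := Module.finite_of_finrank_pos (by omega)
  have hln := hu.ln_eq hv hs
  have hs0 : s ≠ 0 := by rintro rfl; exact hv.w_ne (by simpa using hs)
  have ht0 : t ≠ 0 := by rintro rfl; exact hv.p_ne (by simpa using ht)
  rw [hs, ht] at hL hind
  simp only [out1, out2, out3, smul_smul] at hL hind
  have hann : Module.finrank K Φ.ln.dualAnnihilator = 2 := by
    have := Subspace.finrank_add_finrank_dualAnnihilator_eq Φ.ln
    rw [Φ.finrank_ln] at this
    omega
  have hmem : ∀ {Φ' : ProjFlag K V} {x y z f}, FRep Φ' x y z f → Φ'.ln = Φ.ln →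
      f ∈ Φ.ln.dualAnnihilator := by
    intro Φ' x y z f hf hl
    rw [Submodule.mem_dualAnnihilator]
    intro w hw
    rw [← hl] at hw
    have := Φ'.ln_le_pl hw
    rw [← hf.he] at this
    exact this
  have hg : Submodule.span K {e, e'} = Φ.ln.dualAnnihilator := by
    refine span_pair_eq hann (hmem hu rfl) (hmem hv hln) (hu.e_ne hV) ?_
    rintro ⟨c, hc⟩
    exact hind ⟨s * t * c, by rw [hc]; simp only [out3, smul_smul]⟩
  apply set_eq_of hV h
  · rintro Φ' ⟨h1, h2⟩ x y z f hf
    obtain ⟨c, hc⟩ := hu.ln_eq' hf h2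
    obtain ⟨d, hd⟩ := hu.pt_eq' hf h1
    have hx := hmem hf h2
    rw [← hg] at hx
    obtain ⟨α, β, rfl⟩ := Submodule.mem_span_pair.1 hx
    rw [← hL, Submodule.mem_span_pair, hc, hd]
    refine ⟨d * c * α, d * c * β * (s * t)⁻¹, ?_⟩
    simp only [TensorProduct.tmul_add, TensorProduct.add_tmul, out1, out2, out3, smul_smul,
      smul_add]
    congr 2 <;> field_simp
  · intro Φ' x y z f hf hmem
    rw [← hL, Submodule.mem_span_pair] at hmem
    obtain ⟨α, β, hab⟩ := hmem
    rw [smul_smul, ← out3, ← out3, ← TensorProduct.tmul_add] at hab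
    obtain ⟨⟨d, hd⟩, ⟨c, hc⟩, -⟩ := tmul3_eq hf.p_ne hf.w_ne (hf.e_ne hV) hab.symm
    exact ⟨hu.pt_eq hf hd, hu.ln_eq hf hc⟩

theorem case1 (hV : Module.finrank K V = 4) {L : Submodule K (FlagTensor K V)}
    (h : ∀ z : Submodule K (FlagTensor K V), Module.finrank K z = 1 → z ≤ L →
        z ∈ flagVariety K V) {Φ Ψ : ProjFlag K V} {p q r p' q' r' : V} {e e' : Module.Dual K V}
    (hu : FRep Φ p q r e) (hv : FRep Ψ p' q' r' e')
    (hL : Submodule.span K {p ⊗ₜ[K] wedge2 K V q r ⊗ₜ[K] e,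
      p' ⊗ₜ[K] wedge2 K V q' r' ⊗ₜ[K] e'} = L)
    (hind : ¬ ∃ t : K, p' ⊗ₜ[K] wedge2 K V q' r' ⊗ₜ[K] e' =
      t • (p ⊗ₜ[K] wedge2 K V q r ⊗ₜ[K] e))
    {s t : K} (hs : p' = s • p) (ht : e' = t • e) :
    {x : Submodule K (FlagTensor K V) | ∃ Φ' ∈ flagsOfPointPlane K V Φ.pt Φ.pl,
      IsFlagRep K V Φ' x} =
        {z : Submodule K (FlagTensor K V) | Module.finrank K z = 1 ∧ z ≤ L} := by
  have : FiniteDimensional K V := Module.finite_of_finrank_pos (by omega)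
  have hpt := hu.pt_eq hv hs
  have hpl := hu.pl_eq hV hv ht
  have hs0 : s ≠ 0 := by rintro rfl; exact hv.p_ne (by simpa using hs)
  have ht0 : t ≠ 0 := by rintro rfl; exact hv.e_ne hV (by simpa using ht)
  rw [hs, ht] at hL hind
  simp only [out1, out2, out3, smul_smul] at hL hind
  have hne : Ψ.ln ≠ Φ.ln := by
    intro hl
    obtain ⟨c, hc⟩ := hu.ln_eq' hv hl
    exact hind ⟨s * t * c, by rw [hc]; simp only [out2, smul_smul]; congr 1; ring⟩
  have hsup : Φ.ln ⊔ Ψ.ln = Φ.pl := by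
    refine Submodule.eq_of_le_of_finrank_le (sup_le Φ.ln_le_pl (hpl ▸ Ψ.ln_le_pl)) ?_
    rw [Φ.finrank_pl]
    have hlt : Φ.ln < Φ.ln ⊔ Ψ.ln := by
      refine lt_of_le_of_ne le_sup_left fun heq => hne ?_
      refine Submodule.eq_of_le_of_finrank_eq ?_ (by rw [Φ.finrank_ln, Ψ.finrank_ln])
      rw [heq]
      exact le_sup_right
    have := Submodule.finrank_lt_finrank_of_lt hlt
    rw [Φ.finrank_ln] at this
    omega
  obtain ⟨s₁, hs₁⟩ := exists_compl Φ.finrank_ln (Φ.pt_le_ln hu.p_mem) hu.p_ne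
  obtain ⟨s₂, hs₂⟩ := exists_compl Ψ.finrank_ln (Ψ.pt_le_ln (hpt ▸ hu.p_mem)) hu.p_ne
  obtain ⟨c₁, hc₁⟩ := wedge2_span (hs₁.trans hu.hg.symm)
  obtain ⟨c₂, hc₂⟩ := wedge2_span (hs₂.trans hv.hg.symm)
  apply set_eq_of hV h
  · rintro Φ' ⟨h1, h2⟩ x y z f hf
    obtain ⟨c, hc⟩ := hu.pt_eq' hf h1
    obtain ⟨d, hd⟩ := hu.pl_eq' hV hf h2
    obtain ⟨s₃, hs₃⟩ := exists_compl Φ'.finrank_ln (Φ'.pt_le_ln (h1 ▸ hu.p_mem)) hu.p_ne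
    obtain ⟨c₃, hc₃⟩ := wedge2_span (hf.hg.trans hs₃.symm)
    have hx : s₃ ∈ Φ.pl := by
      rw [← h2]
      apply Φ'.ln_le_pl
      rw [← hs₃]
      exact Submodule.subset_span (by simp)
    rw [← hsup, Submodule.mem_sup, ← hs₁, ← hs₂] at hx
    obtain ⟨v₁, hv₁, v₂, hv₂, hv₃⟩ := hx
    obtain ⟨α₁, β₁, rfl⟩ := Submodule.mem_span_pair.1 hv₁
    obtain ⟨α₂, β₂, rfl⟩ := Submodule.mem_span_pair.1 hv₂
    have hv₄ : s₃ = (α₁ + α₂) • p + β₁ • s₁ + β₂ • s₂ := by rw [← hv₃]; module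
    rw [← hL, Submodule.mem_span_pair, hc₃, hd, hc, hv₄, wedge2_right, hc₁, hc₂]
    refine ⟨d * c * c₃ * β₁ * c₁, d * c * c₃ * β₂ * c₂ * (t * s)⁻¹, ?_⟩
    simp only [TensorProduct.tmul_add, TensorProduct.add_tmul, out1, out2, out3, smul_smul,
      smul_add]
    congr 2 <;> field_simp
  · intro Φ' x y z f hf hmem
    rw [← hL, Submodule.mem_span_pair] at hmem
    obtain ⟨α, β, hab⟩ := hmem
    rw [smul_smul, ← out2, ← out2, ← TensorProduct.add_tmul, ← TensorProduct.tmul_add] at hab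
    obtain ⟨⟨d, hd⟩, -, ⟨c, hc⟩⟩ := tmul3_eq hf.p_ne hf.w_ne (hf.e_ne hV) hab.symm
    exact ⟨hu.pt_eq hf hd, hu.pl_eq hV hf hc⟩

theorem exists_pair {L : Submodule K M} (hL : Module.finrank K L = 2) :
    ∃ u v, u ∈ L ∧ v ∈ L ∧ u ≠ 0 ∧ (¬ ∃ t : K, v = t • u) ∧ Submodule.span K {u, v} = L := by
  have hn : L ≠ ⊥ := by rintro rfl; simp at hL
  obtain ⟨u, hu, hu0⟩ := Submodule.exists_mem_ne_zero_of_ne_bot hn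
  obtain ⟨v, hv⟩ := exists_compl hL hu hu0
  refine ⟨u, v, hu, hv ▸ Submodule.subset_span (by simp), hu0, ?_, hv⟩
  rintro ⟨t, rfl⟩
  have : Submodule.span K {u, t • u} = Submodule.span K {u} := by
    rw [Set.pair_comm]
    exact Submodule.span_insert_eq_span (Submodule.mem_span_singleton.2 ⟨t, rfl⟩)
  rw [← hv, this, finrank_span_singleton hu0] at hL
  omega

end Helpers


/-- **Proposition 4.** The `φ`-images of the pencils of flags are exactly the lines
contained in the flag variety `𝒢`. -/
theorem line_in_flagVariety_iff_pencil
    (hV : Module.finrank K V = 4)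
    (L : Submodule K (FlagTensor K V)) (hL : Module.finrank K L = 2) :
    (∀ z : Submodule K (FlagTensor K V), Module.finrank K z = 1 → z ≤ L →
        z ∈ flagVariety K V) ↔
      ∃ M : Set (ProjFlag K V), IsPencil K V M ∧
        {x : Submodule K (FlagTensor K V) | ∃ Φ ∈ M, IsFlagRep K V Φ x} =
        {z : Submodule K (FlagTensor K V) | Module.finrank K z = 1 ∧ z ≤ L} := by
  constructor
  · intro h
    obtain ⟨u, v, hu, hv, hu0, hind, hspan⟩ := exists_pair hL
    have hv0 : v ≠ 0 := fun h0 => hind ⟨0, by rw [h0, zero_smul]⟩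
    have huv0 : u + v ≠ 0 := fun h0 => hind ⟨-1, by
      rw [neg_smul, one_smul]; exact eq_neg_of_add_eq_zero_right h0⟩
    have key : ∀ w ∈ L, w ≠ 0 → ∃ Φ p q r e, FRep Φ p q r e ∧
        w = p ⊗ₜ[K] wedge2 K V q r ⊗ₜ[K] e := by
      intro w hw hw0
      obtain ⟨Φ, p, q, r, e, h1, -, h2⟩ := exists_rep (h (Submodule.span K {w})
        (finrank_span_singleton hw0) ((Submodule.span_singleton_le_iff_mem _ _).2 hw)) rfl hw0
      exact ⟨Φ, p, q, r, e, h1, h2⟩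
    obtain ⟨Φ, p, q, r, e, hΦ, rfl⟩ := key u hu hu0
    obtain ⟨Ψ, p', q', r', e', hΨ, rfl⟩ := key v hv hv0
    obtain ⟨Θ, p₃, q₃, r₃, e₃, hΘ, hsum⟩ := key _ (L.add_mem hu hv) huv0
    rcases tmul3_add hΦ.p_ne hΦ.w_ne (hΦ.e_ne hV) hΨ.p_ne hΨ.w_ne (hΨ.e_ne hV) hsum with
      ⟨⟨s, hs⟩, ⟨t, ht⟩⟩ | ⟨⟨s, hs⟩, ⟨t, ht⟩⟩ | ⟨⟨s, hs⟩, ⟨t, ht⟩⟩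
    · exact ⟨_, Or.inl ⟨Φ.ln, Φ.pl, Φ.finrank_ln, Φ.finrank_pl, Φ.ln_le_pl, rfl⟩,
        case0 hV h hΦ hΨ hspan hind hs ht⟩
    · exact ⟨_, Or.inr (Or.inl ⟨Φ.pt, Φ.pl, Φ.finrank_pt, Φ.finrank_pl,
        Φ.pt_le_ln.trans Φ.ln_le_pl, rfl⟩), case1 hV h hΦ hΨ hspan hind hs ht⟩
    · exact ⟨_, Or.inr (Or.inr ⟨Φ.pt, Φ.ln, Φ.finrank_pt, Φ.finrank_ln, Φ.pt_le_ln, rfl⟩),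
        case2 hV h hΦ hΨ hspan hind ht hs⟩
  · rintro ⟨M, -, hM⟩ z hz1 hz2
    have hz : z ∈ {z : Submodule K (FlagTensor K V) | Module.finrank K z = 1 ∧ z ≤ L} :=
      ⟨hz1, hz2⟩
    rw [← hM] at hz
    obtain ⟨Φ, -, hΦ⟩ := hz
    exact ⟨Φ, hΦ⟩
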